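/- For every triangle in the Euclidean plane there is a triangle having it as its extouch triangle. Precisely: for any three noncollinear points A, B, C in the Euclidean plane, there exist noncollinear points X, Y, Z such that, setting s = (dist Y Z + dist Z X + dist X Y)/2, the point A lies on the segment [Y,Z] with dist Y A = s − dist X Y and dist Z A = s − dist Z X, the point B lies on the segment [Z,X] with dist Z B = s − dist Y Z and dist X B = s − dist X Y, and the point C lies on the segment [X,Y] with dist X C = s − dist Z X and dist Y C = s − dist Y Z. -/

import Mathlib

open EuclideanGeometry

/-!
The tangent lengths `x, y, z` of a triangle `XYZ` are the numbers `s - YZ`, `s - ZX`, `s - XY`, so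
that its sides are `y + z`, `z + x`, `x + y`. By the law of cosines its extouch triangle has the
squared sides `extouchSideSq x y z`, `extouchSideSq y z x`, `extouchSideSq z x y`, and it suffices
to find `x, y, z` for which these are the squared sides `u, v, w` of the given triangle `ABC`.

The contact points of the sides are those of the excircles exactly when turning any one side about
its contact point does not change the perimeter to first order. We therefore look for a critical
point of the perimeter among the triangles circumscribed about `ABC`. It is a saddle: among the
circumscribed triangles of a fixed shape we take the largest, whose perimeter is explicit, and then
minimise over all shapes, that is, maximise `shapeRatio`. The Lagrange equations of this extremum
are linear in `u, v, w` and the product of the areas; together with Heron's formula they determine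
`u, v, w` up to a factor.
-/

section ShapeForms

/-- Heron's formula: sixteen times the squared area of a triangle, as a function of its squared
sides. -/
def heronForm (u v w : ℝ) : ℝ :=
  2 * (u * v + v * w + w * u) - (u ^ 2 + v ^ 2 + w ^ 2)

/-- Half of the left side `u (q + r - p) + v (r + p - q) + w (p + q - r)` of the Neuberg–Pedoe
inequality, for a triangle with squared sides `u, v, w` and one with squared sides
`p = (y + z) ^ 2`, `q = (z + x) ^ 2`, `r = (x + y) ^ 2`. -/
def pedoeForm (u v w x y z : ℝ) : ℝ :=
  (x * (x + y + z) - y * z) * u + (y * (x + y + z) - z * x) * v + (z * (x + y + z) - x * y) * w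

/-- Four times the product of the areas of a triangle with squared sides `u, v, w` and a triangle
with tangent lengths `x, y, z`. -/
noncomputable def areaProduct (u v w x y z : ℝ) : ℝ :=
  √(heronForm u v w * ((x + y + z) * x * y * z))

/-- Four times the product of the area of a triangle with tangent lengths `x, y, z` and the area of
the largest triangle similar to it that is circumscribed about a triangle with squared sides
`u, v, w`. -/
noncomputable def circumForm (u v w x y z : ℝ) : ℝ :=
  pedoeForm u v w x y z + 2 * areaProduct u v w x y z

/-- A quarter of the inverse square of the semiperimeter of the largest triangle that is
circumscribed about a triangle with squared sides `u, v, w` and similar to the triangle with tangent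
lengths `x, y, z`. It depends only on the ratios of `x, y, z`, and extends by zero to degenerate
shapes. -/
noncomputable def shapeRatio (u v w x y z : ℝ) : ℝ :=
  x * y * z / ((x + y + z) * circumForm u v w x y z)

/-- The Lagrange multiplier in the equations for a critical point of `shapeRatio`. -/
noncomputable def shapeMultiplier (u v w x y z : ℝ) : ℝ :=
  (x + y + z) * (u * x + v * y + w * z) + areaProduct u v w x y z

/-- The squared side, on the contact points of the sides `ZX` and `XY`, of the extouch triangle of
a triangle `XYZ` with tangent lengths `x, y, z`: the law of cosines with
`1 - cos X = 2 * y * z / ((x + y) * (x + z))`. -/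
noncomputable def extouchSideSq (x y z : ℝ) : ℝ :=
  (y - z) ^ 2 + 4 * y ^ 2 * z ^ 2 / ((x + y) * (x + z))

variable {u v w x y z : ℝ}

theorem heronForm_rotate (u v w : ℝ) : heronForm v w u = heronForm u v w := by
  unfold heronForm; ring

theorem heronForm_sq (a b c : ℝ) :
    heronForm (a ^ 2) (b ^ 2) (c ^ 2) =
      (a + b + c) * (b + c - a) * (c + a - b) * (a + b - c) := by
  unfold heronForm; ring

theorem heronForm_smul (c u v w : ℝ) :
    heronForm (c * u) (c * v) (c * w) = c ^ 2 * heronForm u v w := by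
  unfold heronForm; ring

theorem areaProduct_rotate (u v w x y z : ℝ) :
    areaProduct v w u y z x = areaProduct u v w x y z := by
  unfold areaProduct; rw [heronForm_rotate]; ring_nf

theorem circumForm_rotate (u v w x y z : ℝ) :
    circumForm v w u y z x = circumForm u v w x y z := by
  unfold circumForm pedoeForm; rw [areaProduct_rotate]; ring

theorem shapeRatio_rotate (u v w x y z : ℝ) :
    shapeRatio v w u y z x = shapeRatio u v w x y z := by
  unfold shapeRatio; rw [circumForm_rotate]; ring

theorem shapeMultiplier_rotate (u v w x y z : ℝ) :
    shapeMultiplier v w u y z x = shapeMultiplier u v w x y z := by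
  unfold shapeMultiplier; rw [areaProduct_rotate]; ring

theorem circumForm_smul (c u v w x y z : ℝ) :
    circumForm u v w (c * x) (c * y) (c * z) = c ^ 2 * circumForm u v w x y z := by
  have hK : heronForm u v w * ((c * x + c * y + c * z) * (c * x) * (c * y) * (c * z)) =
      (c ^ 2) ^ 2 * (heronForm u v w * ((x + y + z) * x * y * z)) := by ring
  unfold circumForm pedoeForm areaProduct
  rw [hK, Real.sqrt_mul (by positivity), Real.sqrt_sq (by positivity)]
  ring

theorem shapeRatio_smul {c : ℝ} (hc : c ≠ 0) (u v w x y z : ℝ) :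
    shapeRatio u v w (c * x) (c * y) (c * z) = shapeRatio u v w x y z := by
  unfold shapeRatio
  rw [circumForm_smul, show c * x * (c * y) * (c * z) = c ^ 3 * (x * y * z) by ring,
    show (c * x + c * y + c * z) * (c ^ 2 * circumForm u v w x y z) =
      c ^ 3 * ((x + y + z) * circumForm u v w x y z) by ring,
    mul_div_mul_left _ _ (pow_ne_zero 3 hc)]

theorem extouchSideSq_smul (c x y z : ℝ) :
    extouchSideSq (c * x) (c * y) (c * z) = c ^ 2 * extouchSideSq x y z := by
  rcases eq_or_ne c 0 with rfl | hc
  · simp [extouchSideSq]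
  · unfold extouchSideSq
    rw [show 4 * (c * y) ^ 2 * (c * z) ^ 2 = c ^ 2 * (c ^ 2 * (4 * y ^ 2 * z ^ 2)) by ring,
      show (c * x + c * y) * (c * x + c * z) = c ^ 2 * ((x + y) * (x + z)) by ring,
      mul_div_assoc, mul_div_mul_left _ _ (pow_ne_zero 2 hc)]
    ring

end ShapeForms

section Minimum

variable {u v w x y z : ℝ}

theorem pos_of_heronForm_pos (hu : 0 < u) (hH : 0 < heronForm u v w) : 0 < v := by
  have completed_square : heronForm u v w + (u + v - w) ^ 2 = 4 * u * v := by
    unfold heronForm; ring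
  have : 0 < 4 * u * v := by
    rw [← completed_square]; positivity
  exact pos_of_mul_pos_right this (by positivity)

theorem pedoeForm_pos (hu : 0 < u) (hH : 0 < heronForm u v w) (hx : 0 ≤ x) (hy : 0 ≤ y)
    (hz : 0 ≤ z) (hs : 0 < x + y + z) : 0 < pedoeForm u v w x y z := by
  rcases (add_nonneg hy hz).eq_or_lt' with hyz | hyz
  · obtain ⟨rfl, rfl⟩ := (add_eq_zero_iff_of_nonneg hy hz).1 hyz
    have hx' : 0 < x := by simpa only [add_zero] using hs
    have : pedoeForm u v w x 0 0 = x ^ 2 * u := by unfold pedoeForm; ring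
    rw [this]; positivity
  · have completed_square : 4 * u * (y + z) ^ 2 * pedoeForm u v w x y z =
        (2 * u * (z * (x + y + z) - x * y) - (y + z) ^ 2 * (u + v - w)) ^ 2 +
          16 * u ^ 2 * ((x + y + z) * x * y * z) + (y + z) ^ 4 * heronForm u v w := by
      unfold pedoeForm heronForm; ring
    have : 0 < 4 * u * (y + z) ^ 2 * pedoeForm u v w x y z := by
      rw [completed_square]; positivity
    exact pos_of_mul_pos_right this (by positivity)

theorem circumForm_pos (hu : 0 < u) (hH : 0 < heronForm u v w) (hx : 0 ≤ x) (hy : 0 ≤ y)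
    (hz : 0 ≤ z) (hs : 0 < x + y + z) : 0 < circumForm u v w x y z :=
  add_pos_of_pos_of_nonneg (pedoeForm_pos hu hH hx hy hz hs)
    (mul_nonneg two_pos.le (Real.sqrt_nonneg _))

theorem exists_shapeRatio_maximizer_on_stdSimplex (hu : 0 < u) (hH : 0 < heronForm u v w) :
    ∃ p ∈ stdSimplex ℝ (Fin 3),
      IsMaxOn (fun q => shapeRatio u v w (q 0) (q 1) (q 2)) (stdSimplex ℝ (Fin 3)) p := by
  refine (isCompact_stdSimplex ℝ (Fin 3)).exists_isMaxOn ⟨_, single_mem_stdSimplex ℝ 0⟩ ?_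
  unfold shapeRatio
  refine ContinuousOn.div (by fun_prop) ?_ fun q ⟨hq, hsum⟩ => ?_
  · unfold circumForm pedoeForm areaProduct
    fun_prop
  · rw [Fin.sum_univ_three] at hsum
    have hs : 0 < q 0 + q 1 + q 2 := by rw [hsum]; exact one_pos
    exact (mul_pos hs (circumForm_pos hu hH (hq 0) (hq 1) (hq 2) hs)).ne'

theorem shapeRatio_pos (hu : 0 < u) (hH : 0 < heronForm u v w) (hx : 0 < x)
    (hy : 0 < y) (hz : 0 < z) : 0 < shapeRatio u v w x y z := by
  have := circumForm_pos hu hH hx.le hy.le hz.le (by positivity)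
  unfold shapeRatio; positivity

theorem exists_shapeRatio_maximizer (hu : 0 < u) (hH : 0 < heronForm u v w) :
    ∃ x y z : ℝ, 0 < x ∧ 0 < y ∧ 0 < z ∧ ∀ x' y' z', 0 < x' → 0 < y' → 0 < z' →
      shapeRatio u v w x' y' z' ≤ shapeRatio u v w x y z := by
  obtain ⟨p, ⟨hp, -⟩, hmax⟩ := exists_shapeRatio_maximizer_on_stdSimplex hu hH
  have le_max (x' y' z' : ℝ) (hx' : 0 < x') (hy' : 0 < y') (hz' : 0 < z') :
      shapeRatio u v w x' y' z' ≤ shapeRatio u v w (p 0) (p 1) (p 2) := by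
    have hc : 0 < (x' + y' + z')⁻¹ := by positivity
    rw [← shapeRatio_smul hc.ne']
    refine hmax (a := ![_, _, _]) ⟨fun i => ?_, ?_⟩
    · fin_cases i
      exacts [(mul_pos hc hx').le, (mul_pos hc hy').le, (mul_pos hc hz').le]
    · rw [Fin.sum_univ_three]
      change _ * x' + _ * y' + _ * z' = 1
      rw [← mul_add, ← mul_add, inv_mul_cancel₀ (by positivity)]
  have hprod : p 0 * p 1 * p 2 ≠ 0 := fun h0 => by
    have := (shapeRatio_pos hu hH one_pos one_pos one_pos).trans_le
      (le_max 1 1 1 one_pos one_pos one_pos)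
    rw [shapeRatio, h0, zero_div] at this
    exact this.false
  obtain ⟨⟨h0, h1⟩, h2⟩ : (p 0 ≠ 0 ∧ p 1 ≠ 0) ∧ p 2 ≠ 0 := by simpa using hprod
  exact ⟨p 0, p 1, p 2, (hp 0).lt_of_ne' h0, (hp 1).lt_of_ne' h1, (hp 2).lt_of_ne' h2, le_max⟩

end Minimum

section CriticalPoint

variable {u v w x y z : ℝ}

theorem hasDerivAt_quadratic {𝕜 : Type*} [NontriviallyNormedField 𝕜] (a b c t : 𝕜) :
    HasDerivAt (fun t => a * t ^ 2 + b * t + c) (2 * a * t + b) t := by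
  refine ((((hasDerivAt_pow 2 t).const_mul a).add ((hasDerivAt_id' t).const_mul b)).add_const
    c).congr_deriv ?_
  push_cast; ring

theorem hasDerivAt_pedoeForm (u v w x y z : ℝ) :
    HasDerivAt (fun t => pedoeForm u v w t y z)
      (u * (2 * x + y + z) + v * (y - z) + w * (z - y)) x := by
  have quadratic : (fun t => pedoeForm u v w t y z) = fun t =>
      u * t ^ 2 + (u * (y + z) + v * (y - z) + w * (z - y)) * t +
        ((y * v + z * w) * (y + z) - y * z * u) := by
    funext t; unfold pedoeForm; ring
  rw [quadratic]
  exact (hasDerivAt_quadratic _ _ _ x).congr_deriv (by ring)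

theorem hasDerivAt_areaProduct (h : 0 < heronForm u v w * ((x + y + z) * x * y * z)) :
    HasDerivAt (fun t => areaProduct u v w t y z)
      (areaProduct u v w x y z * (2 * x + y + z) / (2 * (x * (x + y + z)))) x := by
  have quadratic : (fun t => heronForm u v w * ((t + y + z) * t * y * z)) = fun t =>
      heronForm u v w * (y * z) * t ^ 2 + heronForm u v w * (y * z * (y + z)) * t + 0 := by
    funext t; ring
  have hradicand := hasDerivAt_quadratic (heronForm u v w * (y * z))
    (heronForm u v w * (y * z * (y + z))) 0 x
  rw [← quadratic] at hradicand
  have hm : areaProduct u v w x y z ≠ 0 := (Real.sqrt_pos.2 h).ne'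
  have hm_sq : areaProduct u v w x y z ^ 2 = heronForm u v w * ((x + y + z) * x * y * z) :=
    Real.sq_sqrt h.le
  have hx : x ≠ 0 := by rintro rfl; simp at h
  have hs : x + y + z ≠ 0 := by intro hs; simp [hs] at h
  refine (hradicand.sqrt h.ne').congr_deriv ?_
  change _ / (2 * areaProduct u v w x y z) = _
  field_simp
  linear_combination -(2 * x + y + z) * hm_sq

theorem hasDerivAt_circumForm (h : 0 < heronForm u v w * ((x + y + z) * x * y * z)) :
    HasDerivAt (fun t => circumForm u v w t y z)
      (u * (2 * x + y + z) + v * (y - z) + w * (z - y) +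
        areaProduct u v w x y z * (2 * x + y + z) / (x * (x + y + z))) x := by
  refine ((hasDerivAt_pedoeForm u v w x y z).fun_add
    ((hasDerivAt_areaProduct h).const_mul 2)).congr_deriv ?_
  rw [← mul_div_assoc, mul_div_mul_left _ _ two_ne_zero]

theorem deriv_circumForm_of_isLocalMax {D' : ℝ} (hy : y ≠ 0) (hz : z ≠ 0)
    (hs : x + y + z ≠ 0) (hD : circumForm u v w x y z ≠ 0)
    (hD' : HasDerivAt (fun t => circumForm u v w t y z) D' x)
    (hmax : IsLocalMax (fun t => shapeRatio u v w t y z) x) :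
    x * (x + y + z) * D' = (y + z) * circumForm u v w x y z := by
  have hderiv := (((hasDerivAt_id' x).mul_const y).mul_const z).fun_div
    ((((hasDerivAt_id' x).add_const y).add_const z).fun_mul hD') (mul_ne_zero hs hD)
  have hzero := hmax.hasDerivAt_eq_zero hderiv
  rw [div_eq_zero_iff, or_iff_left (pow_ne_zero 2 (mul_ne_zero hs hD))] at hzero
  apply mul_left_cancel₀ (mul_ne_zero hy hz)
  linear_combination -hzero

theorem lagrange_eq_of_isLocalMax (hu : 0 < u) (hH : 0 < heronForm u v w)
    (hx : 0 < x) (hy : 0 < y) (hz : 0 < z)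
    (hmax : IsLocalMax (fun t => shapeRatio u v w t y z) x) :
    (x + y + z) * (x + y) * (x + z) * u + circumForm u v w x y z * x =
      shapeMultiplier u v w x y z * (y + z) := by
  have hs : x + y + z ≠ 0 := by positivity
  have hD := (circumForm_pos hu hH hx.le hy.le hz.le (by positivity)).ne'
  have hcrit := deriv_circumForm_of_isLocalMax hy.ne' hz.ne' hs hD
    (hasDerivAt_circumForm (by positivity)) hmax
  rw [mul_add, mul_div_cancel₀ _ (mul_ne_zero hx.ne' hs)] at hcrit
  unfold shapeMultiplier
  unfold circumForm pedoeForm at hcrit ⊢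
  linear_combination hcrit

end CriticalPoint

section Solution

variable {u v w x y z D l m : ℝ}

theorem eq_extouchSideSq_of_lagrange (hx : 0 < x) (hy : 0 < y) (hz : 0 < z)
    (hu : (x + y + z) * (x + y) * (x + z) * u + D * x = l * (y + z))
    (hl : 4 * (x * y * z) * l = ((x + y) * (y + z) * (z + x) - 4 * (x * y * z)) * D) :
    4 * ((x + y + z) * x * y * z) * u = D * extouchSideSq x y z := by
  have hside : extouchSideSq x y z * ((x + y) * (x + z)) =
      (y - z) ^ 2 * ((x + y) * (x + z)) + 4 * y ^ 2 * z ^ 2 := by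
    unfold extouchSideSq; field_simp
  apply mul_right_cancel₀ (show (x + y) * (x + z) ≠ 0 by positivity)
  linear_combination 4 * (x * y * z) * hu + (y + z) * hl - D * hside

theorem multiplier_eq_of_lagrange (hx : 0 < x) (hy : 0 < y) (hz : 0 < z) (hD : D ≠ 0)
    (hm : m ^ 2 = heronForm u v w * ((x + y + z) * x * y * z))
    (hl : l = (x + y + z) * (u * x + v * y + w * z) + m)
    (hu : (x + y + z) * (x + y) * (x + z) * u + D * x = l * (y + z))
    (hv : (x + y + z) * (y + z) * (y + x) * v + D * y = l * (z + x))
    (hw : (x + y + z) * (z + x) * (z + y) * w + D * z = l * (x + y)) :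
    4 * (x * y * z) * l = ((x + y) * (y + z) * (z + x) - 4 * (x * y * z)) * D := by
  set c := (x + y + z) * ((x + y) * (y + z) * (z + x))
  have area_eq : (x + y) * (y + z) * (z + x) * m =
      D * ((x + y) * (y + z) * (z + x) - 2 * (x * y * z)) - 4 * (x * y * z) * l := by
    linear_combination -(x + y) * (y + z) * (z + x) * hl
      - x * (y + z) * hu - y * (z + x) * hv - z * (x + y) * hw
  have hcu : c * u = l * (y + z) ^ 2 - D * (x * (y + z)) := by
    linear_combination (y + z) * hu
  have hcv : c * v = l * (z + x) ^ 2 - D * (y * (z + x)) := by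
    linear_combination (z + x) * hv
  have hcw : c * w = l * (x + y) ^ 2 - D * (z * (x + y)) := by
    linear_combination (x + y) * hw
  have heron_eq := heronForm_smul c u v w
  rw [hcu, hcv, hcw] at heron_eq
  -- Squaring `area_eq` eliminates `m`, and the resulting quadratic relation between `l` and `D`
  -- splits because one of its roots is `D = 0`.
  have factored : D * (x + y + z) ^ 2 * ((x + y) * (y + z) * (z + x)) *
      (4 * (x * y * z) * l - ((x + y) * (y + z) * (z + x) - 4 * (x * y * z)) * D) = 0 := by
    unfold heronForm at heron_eq hm
    linear_combination -c ^ 2 * hm + (x + y + z) * x * y * z * heron_eq +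
      (x + y + z) ^ 2 * ((x + y) * (y + z) * (z + x) * m +
        (D * ((x + y) * (y + z) * (z + x) - 2 * (x * y * z)) - 4 * (x * y * z) * l)) * area_eq
  have : D * (x + y + z) ^ 2 * ((x + y) * (y + z) * (z + x)) ≠ 0 :=
    mul_ne_zero (mul_ne_zero hD (by positivity)) (by positivity)
  exact sub_eq_zero.1 ((mul_eq_zero.1 factored).resolve_left this)

theorem exists_scaled_extouchSideSq (hu : 0 < u) (hH : 0 < heronForm u v w) :
    ∃ x y z t : ℝ, 0 < x ∧ 0 < y ∧ 0 < z ∧ 0 < t ∧ u = t * extouchSideSq x y z ∧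
      v = t * extouchSideSq y z x ∧ w = t * extouchSideSq z x y := by
  obtain ⟨x, y, z, hx, hy, hz, hmax⟩ := exists_shapeRatio_maximizer hu hH
  have hD := circumForm_pos hu hH hx.le hy.le hz.le (by positivity)
  have hH₁ : 0 < heronForm v w u := by rwa [heronForm_rotate]
  have hH₂ : 0 < heronForm w u v := by rwa [heronForm_rotate, heronForm_rotate]
  have hv := pos_of_heronForm_pos hu hH
  have hw := pos_of_heronForm_pos hv hH₁
  have eq_u := lagrange_eq_of_isLocalMax hu hH hx hy hz <|
    (lt_mem_nhds hx).mono fun t ht => hmax t y z ht hy hz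
  have eq_v := lagrange_eq_of_isLocalMax hv hH₁ hy hz hx <|
    (lt_mem_nhds hy).mono fun t ht => by
      simpa only [shapeRatio_rotate u v w] using hmax x t z hx ht hz
  have eq_w := lagrange_eq_of_isLocalMax hw hH₂ hz hx hy <|
    (lt_mem_nhds hz).mono fun t ht => by
      simpa only [shapeRatio_rotate v w u, shapeRatio_rotate u v w] using hmax x y t hx hy ht
  rw [circumForm_rotate u v w, shapeMultiplier_rotate u v w] at eq_v
  rw [circumForm_rotate v w u, circumForm_rotate u v w, shapeMultiplier_rotate v w u,
    shapeMultiplier_rotate u v w] at eq_w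
  have hl := multiplier_eq_of_lagrange hx hy hz hD.ne'
    (m := areaProduct u v w x y z) (l := shapeMultiplier u v w x y z)
    (Real.sq_sqrt (mul_pos hH (by positivity)).le) rfl eq_u
    (by linear_combination eq_v) (by linear_combination eq_w)
  have hu' := eq_extouchSideSq_of_lagrange hx hy hz eq_u hl
  have hv' := eq_extouchSideSq_of_lagrange hy hz hx eq_v (by linear_combination hl)
  have hw' := eq_extouchSideSq_of_lagrange hz hx hy eq_w (by linear_combination hl)
  refine ⟨x, y, z, circumForm u v w x y z / (4 * ((x + y + z) * x * y * z)), hx, hy, hz,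
    by positivity, ?_, ?_, ?_⟩ <;> rw [div_mul_eq_mul_div, eq_div_iff (by positivity)]
  · linear_combination hu'
  · linear_combination hv'
  · linear_combination hw'

theorem exists_eq_extouchSideSq (hu : 0 < u) (hH : 0 < heronForm u v w) :
    ∃ x y z : ℝ, 0 < x ∧ 0 < y ∧ 0 < z ∧ u = extouchSideSq x y z ∧
      v = extouchSideSq y z x ∧ w = extouchSideSq z x y := by
  obtain ⟨x, y, z, t, hx, hy, hz, ht, eq_u, eq_v, eq_w⟩ := exists_scaled_extouchSideSq hu hH
  refine ⟨√t * x, √t * y, √t * z, by positivity, by positivity, by positivity, ?_, ?_, ?_⟩ <;>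
    rwa [extouchSideSq_smul, Real.sq_sqrt ht.le]

end Solution

section Collinearity

theorem collinear_of_subset_affineSpan {k V P : Type*} [DivisionRing k] [AddCommGroup V]
    [Module k V] [AddTorsor V P] {s t : Set P} (hs : Collinear k s)
    (hst : t ⊆ affineSpan k s) : Collinear k t := by
  have hle : vectorSpan k t ≤ vectorSpan k s := by
    rw [← direction_affineSpan, ← direction_affineSpan]
    exact AffineSubspace.direction_le (affineSpan_le.2 hst)
  exact (Submodule.rank_mono hle).trans hs

theorem collinear_of_mem_segments {k E : Type*} [Field k] [LinearOrder k] [IsStrictOrderedRing k]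
    [AddCommGroup E] [Module k E] {A B C X Y Z : E} (h : Collinear k {X, Y, Z})
    (hA : A ∈ segment k Y Z) (hB : B ∈ segment k Z X) (hC : C ∈ segment k X Y) :
    Collinear k {A, B, C} := by
  have hspan {P Q M : E} (hP : P ∈ ({X, Y, Z} : Set E)) (hQ : Q ∈ ({X, Y, Z} : Set E))
      (hM : M ∈ segment k P Q) : M ∈ affineSpan k {X, Y, Z} :=
    affineSpan_pair_le_of_mem_of_mem (mem_affineSpan k hP) (mem_affineSpan k hQ)
      (mem_segment_iff_wbtw.1 hM).mem_affineSpan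
  refine collinear_of_subset_affineSpan h ?_
  rintro M (rfl | rfl | rfl)
  · exact hspan (by simp) (by simp) hA
  · exact hspan (by simp) (by simp) hB
  · exact hspan (by simp) (by simp) hC

theorem dist_lt_dist_add_dist_of_not_collinear {E P : Type*} [NormedAddCommGroup E]
    [NormedSpace ℝ E] [StrictConvexSpace ℝ E] [MetricSpace P] [NormedAddTorsor E P] {p q r : P}
    (h : ¬ Collinear ℝ {p, q, r}) : dist p r < dist p q + dist q r :=
  dist_lt_dist_add_dist_iff.2 fun hw => h hw.collinear

theorem heronForm_dist_sq_pos {E P : Type*} [NormedAddCommGroup E] [NormedSpace ℝ E]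
    [StrictConvexSpace ℝ E] [MetricSpace P] [NormedAddTorsor E P] {A B C : P}
    (h : ¬ Collinear ℝ {A, B, C}) :
    0 < heronForm (dist B C ^ 2) (dist C A ^ 2) (dist A B ^ 2) := by
  have ineq_A : dist B C < dist C A + dist A B := by
    rw [Set.insert_comm] at h
    simpa only [dist_comm, add_comm] using dist_lt_dist_add_dist_of_not_collinear h
  have ineq_B : dist C A < dist A B + dist B C := by
    simpa only [dist_comm] using dist_lt_dist_add_dist_of_not_collinear h
  have ineq_C : dist A B < dist B C + dist C A := by
    rw [Set.pair_comm] at h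
    simpa only [dist_comm, add_comm] using dist_lt_dist_add_dist_of_not_collinear h
  rw [heronForm_sq]
  refine mul_pos (mul_pos (mul_pos ?_ ?_) ?_) ?_ <;> linarith [dist_nonneg (x := B) (y := C)]

end Collinearity

section Construction

section Module

variable {E : Type*} [AddCommGroup E] [Module ℝ E]

/-- The vertex `X` of the triangle with tangent lengths `x, y, z` whose sides `YZ`, `ZX`, `XY` have
the excircle contact points `A`, `B`, `C`. It solves `(y + z) • A = y • Y + z • Z` together with
the two equations obtained by cyclic rotation. -/
noncomputable def circumVertex (x y z : ℝ) (A B C : E) : E :=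
  (2 * x)⁻¹ • ((z + x) • B + (x + y) • C - (y + z) • A)

theorem lineMap_circumVertex {x y z : ℝ} (hy : y ≠ 0) (hz : z ≠ 0) (hyz : y + z ≠ 0) (A B C : E) :
    AffineMap.lineMap (circumVertex y z x B C A) (circumVertex z x y C A B) (z / (y + z)) = A := by
  unfold circumVertex
  rw [AffineMap.lineMap_apply_module]
  match_scalars <;> field_simp <;> ring

end Module

theorem mem_segment_and_dist_lineMap {E : Type*} [SeminormedAddCommGroup E] [NormedSpace ℝ E]
    {P Q : E} {p q : ℝ} (hp : 0 < p) (hq : 0 < q) (hPQ : dist P Q = q + p) :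
    AffineMap.lineMap P Q (p / (q + p)) ∈ segment ℝ P Q ∧
      dist P (AffineMap.lineMap P Q (p / (q + p))) = p ∧
      dist Q (AffineMap.lineMap P Q (p / (q + p))) = q := by
  have hq' : 1 - p / (q + p) = q / (q + p) := by field_simp; ring
  refine ⟨lineMap_mem_segment ℝ P Q ⟨by positivity, ?_⟩, ?_, ?_⟩
  · rw [div_le_one (by positivity)]; linarith
  · rw [dist_left_lineMap, hPQ, Real.norm_of_nonneg (by positivity),
      div_mul_cancel₀ _ (by positivity)]
  · rw [dist_right_lineMap, hq', hPQ, Real.norm_of_nonneg (by positivity),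
      div_mul_cancel₀ _ (by positivity)]

section InnerProductSpace

variable {E : Type*} [NormedAddCommGroup E] [InnerProductSpace ℝ E]

theorem norm_smul_sub_smul_sq (a b : ℝ) (p q : E) :
    ‖a • p - b • q‖ ^ 2 =
      a ^ 2 * ‖p‖ ^ 2 + b ^ 2 * ‖q‖ ^ 2 - a * b * (‖p‖ ^ 2 + ‖q‖ ^ 2 - ‖p - q‖ ^ 2) := by
  rw [norm_sub_sq_real, norm_sub_sq_real, real_inner_smul_left, real_inner_smul_right, norm_smul,
    norm_smul, mul_pow, mul_pow, Real.norm_eq_abs, Real.norm_eq_abs, sq_abs, sq_abs]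
  ring

theorem dist_circumVertex {x y z : ℝ} (hx : 0 < x) (hy : 0 < y) (hz : 0 < z) {A B C : E}
    (hBC : dist B C ^ 2 = extouchSideSq x y z) (hCA : dist C A ^ 2 = extouchSideSq y z x)
    (hAB : dist A B ^ 2 = extouchSideSq z x y) :
    dist (circumVertex y z x B C A) (circumVertex z x y C A B) = y + z := by
  have hnorm : ‖(x + y) • (C - A) - (z + x) • (B - A)‖ = 2 * y * z := by
    rw [← sq_eq_sq₀ (norm_nonneg _) (by positivity), norm_smul_sub_smul_sq,
      sub_sub_sub_cancel_right, ← dist_eq_norm, ← dist_eq_norm, ← dist_eq_norm,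
      dist_comm C B, dist_comm B A, hBC, hCA, hAB]
    unfold extouchSideSq
    field_simp
    ring
  have hdiff : circumVertex y z x B C A - circumVertex z x y C A B =
      ((y + z) / (2 * y * z)) • ((x + y) • (C - A) - (z + x) • (B - A)) := by
    unfold circumVertex
    match_scalars <;> field_simp <;> ring
  rw [dist_eq_norm, hdiff, norm_smul, hnorm, Real.norm_of_nonneg (by positivity)]
  field_simp

theorem circumVertex_contact {x y z : ℝ} (hx : 0 < x) (hy : 0 < y) (hz : 0 < z) {A B C : E}
    (hBC : dist B C ^ 2 = extouchSideSq x y z) (hCA : dist C A ^ 2 = extouchSideSq y z x)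
    (hAB : dist A B ^ 2 = extouchSideSq z x y) :
    A ∈ segment ℝ (circumVertex y z x B C A) (circumVertex z x y C A B) ∧
      dist (circumVertex y z x B C A) A = z ∧ dist (circumVertex z x y C A B) A = y := by
  simpa only [lineMap_circumVertex hy.ne' hz.ne' (add_pos hy hz).ne'] using
    mem_segment_and_dist_lineMap hz hy (dist_circumVertex hx hy hz hBC hCA hAB)

end InnerProductSpace

end Construction

theorem exists_triangle_with_given_extouch_triangle_general {E : Type*} [NormedAddCommGroup E]
    [InnerProductSpace ℝ E] (A B C : E) (h : ¬ Collinear ℝ ({A, B, C} : Set E)) :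
    ∃ X Y Z : E,
      ¬ Collinear ℝ ({X, Y, Z} : Set E) ∧
      (let s := (dist Y Z + dist Z X + dist X Y) / 2
       A ∈ segment ℝ Y Z ∧ dist Y A = s - dist X Y ∧ dist Z A = s - dist Z X ∧
       B ∈ segment ℝ Z X ∧ dist Z B = s - dist Y Z ∧ dist X B = s - dist X Y ∧
       C ∈ segment ℝ X Y ∧ dist X C = s - dist Z X ∧ dist Y C = s - dist Y Z) := by
  have hBC := dist_pos.2 (ne₂₃_of_not_collinear h)
  obtain ⟨x, y, z, hx, hy, hz, hu, hv, hw⟩ := exists_eq_extouchSideSq (pow_pos hBC 2)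
    (heronForm_dist_sq_pos h)
  obtain ⟨memA, distYA, distZA⟩ := circumVertex_contact hx hy hz hu hv hw
  obtain ⟨memB, distZB, distXB⟩ := circumVertex_contact hy hz hx hv hw hu
  obtain ⟨memC, distXC, distYC⟩ := circumVertex_contact hz hx hy hw hu hv
  refine ⟨circumVertex x y z A B C, circumVertex y z x B C A, circumVertex z x y C A B,
    fun hcol => h (collinear_of_mem_segments hcol memA memB memC), ?_⟩
  dsimp only
  rw [dist_circumVertex hx hy hz hu hv hw, dist_circumVertex hy hz hx hv hw hu,
    dist_circumVertex hz hx hy hw hu hv]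
  refine ⟨memA, ?_, ?_, memB, ?_, ?_, memC, ?_, ?_⟩ <;> linarith

/-- For every triangle in the Euclidean plane there is a triangle having it as its
extouch triangle. -/
theorem exists_triangle_with_given_extouch_triangle
    (A B C : EuclideanSpace ℝ (Fin 2)) (h : ¬ Collinear ℝ ({A, B, C} : Set (EuclideanSpace ℝ (Fin 2)))) :
    ∃ X Y Z : EuclideanSpace ℝ (Fin 2),
      ¬ Collinear ℝ ({X, Y, Z} : Set (EuclideanSpace ℝ (Fin 2))) ∧
      (let s := (dist Y Z + dist Z X + dist X Y) / 2
       A ∈ segment ℝ Y Z ∧ dist Y A = s - dist X Y ∧ dist Z A = s - dist Z X ∧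
       B ∈ segment ℝ Z X ∧ dist Z B = s - dist Y Z ∧ dist X B = s - dist X Y ∧
       C ∈ segment ℝ X Y ∧ dist X C = s - dist Z X ∧ dist Y C = s - dist Y Z) :=
  exists_triangle_with_given_extouch_triangle_general A B C h
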